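/- Suppose the standing assumptions on f, g, h, Ω, F hold. Let x⋆ ∈ dom(F) and c⋆ := F(x⋆). Then: (a) x⋆ is a local minimizer of F on ℝⁿ (i.e., there is δ > 0 with F(x⋆) ≤ F(x) for all x with ‖x−x⋆‖₂ < δ) if and only if x⋆ is a local minimizer of the function x ↦ f(x) + h(x) − c⋆·g(x) on Ω; (b) x⋆ is a global minimizer of F on ℝⁿ if and only if x⋆ is a global minimizer of x ↦ f(x) + h(x) − c⋆·g(x) on Ω. -/

import Mathlib

open Filter Topology
open scoped RealInnerProductSpace

noncomputable section

/-- The Fréchet subdifferential of an extended-real-valued function `φ` at `x`: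
the set of `y` with `liminf_{z→x, z≠x} (φ z − φ x − ⟨y, z−x⟩)/‖z−x‖ ≥ 0`,
empty when `φ x = +∞`. -/
def fsub {n : ℕ} (φ : EuclideanSpace ℝ (Fin n) → EReal) (x : EuclideanSpace ℝ (Fin n)) :
    Set (EuclideanSpace ℝ (Fin n)) :=
  {y | φ x ≠ ⊤ ∧
    0 ≤ liminf (fun z => (φ z - φ x - ((⟪y, z - x⟫ : ℝ) : EReal)) / ((‖z - x‖ : ℝ) : EReal))
      (𝓝[≠] x)}

/-- The limiting (Mordukhovich) subdifferential. -/
def lsub {n : ℕ} (φ : EuclideanSpace ℝ (Fin n) → EReal) (x : EuclideanSpace ℝ (Fin n)) :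
    Set (EuclideanSpace ℝ (Fin n)) :=
  {y | ∃ u : ℕ → EuclideanSpace ℝ (Fin n), ∃ v : ℕ → EuclideanSpace ℝ (Fin n),
      Tendsto u atTop (𝓝 x) ∧ Tendsto (fun k => φ (u k)) atTop (𝓝 (φ x)) ∧
      (∀ k, v k ∈ fsub φ (u k)) ∧ Tendsto v atTop (𝓝 y)}

/-- The subdifferential of a convex real-valued function. -/
def csub {n : ℕ} (g : EuclideanSpace ℝ (Fin n) → ℝ) (x : EuclideanSpace ℝ (Fin n)) :
    Set (EuclideanSpace ℝ (Fin n)) :=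
  {y | ∀ z, g x + ⟪y, z - x⟫ ≤ g z}

/-- The (possibly set-valued) proximity operator of a proper lsc extended-real-valued
function `ψ` at `u`. -/
def proxSet {n : ℕ} (ψ : EuclideanSpace ℝ (Fin n) → EReal) (u : EuclideanSpace ℝ (Fin n)) :
    Set (EuclideanSpace ℝ (Fin n)) :=
  {y | ∀ z, ψ y + ((‖y - u‖ ^ 2 / 2 : ℝ) : EReal) ≤ ψ z + ((‖z - u‖ ^ 2 / 2 : ℝ) : EReal)}

/-- The fractional objective `F = (f+h)/g` on `Ω ∩ dom f`, `+∞` elsewhere. -/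
def Ffrac {n : ℕ} (f : EuclideanSpace ℝ (Fin n) → EReal) (g h : EuclideanSpace ℝ (Fin n) → ℝ) :
    EuclideanSpace ℝ (Fin n) → EReal :=
  fun x => if g x ≠ 0 ∧ f x ≠ ⊤ then ((((f x).toReal + h x) / g x : ℝ) : EReal) else ⊤

theorem isLocalMinOn_iff_exists_norm_sub_lt {E β : Type*} [SeminormedAddCommGroup E] [Preorder β]
    {φ : E → β} {s : Set E} {a : E} :
    IsLocalMinOn φ s a ↔ ∃ δ > (0 : ℝ), ∀ x ∈ s, ‖x - a‖ < δ → φ a ≤ φ x := by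
  simp only [IsLocalMinOn, IsMinFilter, eventually_nhdsWithin_iff, Metric.eventually_nhds_iff,
    dist_eq_norm, imp.swap]

theorem isLocalMin_iff_exists_norm_sub_lt {E β : Type*} [SeminormedAddCommGroup E] [Preorder β]
    {φ : E → β} {a : E} :
    IsLocalMin φ a ↔ ∃ δ > (0 : ℝ), ∀ x, ‖x - a‖ < δ → φ a ≤ φ x := by
  simp only [IsLocalMin, IsMinFilter, Metric.eventually_nhds_iff, dist_eq_norm]

/-- The fractional objective `(f + h) / g` on an arbitrary type, extended by `+∞` off
`{g ≠ 0} ∩ dom f`; `Ffrac` is the case of Euclidean space. Where `f x = ⊥`, the numerator takes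
the junk value `h x`. -/
def fractionalObjective {α : Type*} (f : α → EReal) (g h : α → ℝ) : α → EReal :=
  fun x => if g x ≠ 0 ∧ f x ≠ ⊤ then ((((f x).toReal + h x) / g x : ℝ) : EReal) else ⊤

theorem Ffrac_eq_fractionalObjective {n : ℕ} (f : EuclideanSpace ℝ (Fin n) → EReal)
    (g h : EuclideanSpace ℝ (Fin n) → ℝ) : Ffrac f g h = fractionalObjective f g h :=
  rfl

/-- The objective `f + h - c * g` of the parametric problem with parameter `c`. The finite part
`h - c * g` is formed in `ℝ`, so that no difference of infinities occurs. -/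
def parametricObjective {α : Type*} (f : α → EReal) (g h : α → ℝ) (c : ℝ) : α → EReal :=
  fun x => f x + ((h x - c * g x : ℝ) : EReal)

section Pointwise

variable {α : Type*} {f : α → EReal} {g h : α → ℝ} {c : ℝ} {a x : α}

theorem fractionalObjective_eq_coe (hg : g x ≠ 0) (htop : f x ≠ ⊤) :
    fractionalObjective f g h x = (((f x).toReal + h x) / g x : ℝ) :=
  if_pos ⟨hg, htop⟩

theorem coe_toReal_fractionalObjective (hg : g x ≠ 0) (htop : f x ≠ ⊤) :
    ((fractionalObjective f g h x).toReal : EReal) = fractionalObjective f g h x := by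
  rw [fractionalObjective_eq_coe hg htop, EReal.toReal_coe]

theorem parametricObjective_eq_coe (hbot : f x ≠ ⊥) (htop : f x ≠ ⊤) :
    parametricObjective f g h c x = ((f x).toReal + (h x - c * g x) : ℝ) := by
  rw [EReal.coe_add, EReal.coe_toReal htop hbot, parametricObjective]

theorem parametricObjective_toReal_fractionalObjective_self (hg : g x ≠ 0) (hbot : f x ≠ ⊥)
    (htop : f x ≠ ⊤) :
    parametricObjective f g h (fractionalObjective f g h x).toReal x = 0 := by
  rw [parametricObjective_eq_coe hbot htop, fractionalObjective_eq_coe hg htop,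
    EReal.toReal_coe, div_mul_cancel₀ _ hg, EReal.coe_eq_zero]
  ring

theorem coe_le_fractionalObjective_iff (hbot : f x ≠ ⊥) (hpos : f x ≠ ⊤ → g x ≠ 0 → 0 < g x) :
    (c : EReal) ≤ fractionalObjective f g h x ↔
      (g x ≠ 0 → 0 ≤ parametricObjective f g h c x) := by
  by_cases hg : g x = 0
  · simp [fractionalObjective, hg]
  by_cases htop : f x = ⊤
  · simp only [fractionalObjective, parametricObjective, htop, EReal.top_add_coe, ne_eq,
      not_true_eq_false, and_false, if_false, le_top, implies_true]
  calc (c : EReal) ≤ fractionalObjective f g h x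
      ↔ c * g x ≤ (f x).toReal + h x := by
        rw [fractionalObjective_eq_coe hg htop, EReal.coe_le_coe_iff, le_div_iff₀ (hpos htop hg)]
    _ ↔ 0 ≤ parametricObjective f g h c x := by
        rw [parametricObjective_eq_coe hbot htop, EReal.coe_nonneg, ← add_sub_assoc, sub_nonneg]
    _ ↔ (g x ≠ 0 → 0 ≤ parametricObjective f g h c x) := (imp_iff_right hg).symm

-- Dinkelbach's reduction: for `c = F a` the parametric objective vanishes at `a`, so being minimal
-- at `a` means being nonnegative, which is `c ≤ F` after division by `g > 0`.
theorem fractionalObjective_le_iff (hbot : ∀ z, f z ≠ ⊥)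
    (hpos : ∀ z, f z ≠ ⊤ → g z ≠ 0 → 0 < g z) (hga : g a ≠ 0) (hfa : f a ≠ ⊤) (x : α) :
    fractionalObjective f g h a ≤ fractionalObjective f g h x ↔
      (g x ≠ 0 → parametricObjective f g h (fractionalObjective f g h a).toReal a ≤
        parametricObjective f g h (fractionalObjective f g h a).toReal x) := by
  rw [parametricObjective_toReal_fractionalObjective_self hga (hbot a) hfa,
    ← coe_le_fractionalObjective_iff (hbot x) (hpos x), coe_toReal_fractionalObjective hga hfa]

theorem isMinFilter_fractionalObjective_iff (hbot : ∀ z, f z ≠ ⊥)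
    (hpos : ∀ z, f z ≠ ⊤ → g z ≠ 0 → 0 < g z) (hga : g a ≠ 0) (hfa : f a ≠ ⊤) (l : Filter α) :
    IsMinFilter (fractionalObjective f g h) l a ↔
      IsMinFilter (parametricObjective f g h (fractionalObjective f g h a).toReal)
        (l ⊓ 𝓟 {x | g x ≠ 0}) a :=
  (eventually_congr (.of_forall (fractionalObjective_le_iff hbot hpos hga hfa))).trans
    eventually_inf_principal.symm

end Pointwise

theorem fractional_iff_parametric_minimizer_general {X : Type*} [TopologicalSpace X]
    {f : X → EReal} {g : X → ℝ} (h : X → ℝ) (hbot : ∀ z, f z ≠ ⊥)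
    (hpos : ∀ z, f z ≠ ⊤ → g z ≠ 0 → 0 < g z) {a : X} (hga : g a ≠ 0) (hfa : f a ≠ ⊤) :
    (IsLocalMin (fractionalObjective f g h) a ↔
      IsLocalMinOn (parametricObjective f g h (fractionalObjective f g h a).toReal)
        {x | g x ≠ 0} a) ∧
    (IsMinOn (fractionalObjective f g h) Set.univ a ↔
      IsMinOn (parametricObjective f g h (fractionalObjective f g h a).toReal)
        {x | g x ≠ 0} a) := by
  have minimizer_iff := isMinFilter_fractionalObjective_iff (h := h) hbot hpos hga hfa
  refine ⟨minimizer_iff (𝓝 a), ?_⟩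
  simpa only [IsMinOn, principal_univ, top_inf_eq] using minimizer_iff ⊤

/-- Proposition 3.1: local/global minimizers of the fractional problem coincide with
those of the parametric problem with parameter c⋆ = F(x⋆). -/
theorem fractional_iff_parametric_minimizer
    {n : ℕ} (hn : 1 ≤ n)
    (f : EuclideanSpace ℝ (Fin n) → EReal) (g h : EuclideanSpace ℝ (Fin n) → ℝ)
    (h' : EuclideanSpace ℝ (Fin n) → EuclideanSpace ℝ (Fin n)) (L : ℝ)
    (hf_ne_bot : ∀ z, f z ≠ ⊥) (hf_proper : ∃ z, f z ≠ ⊤)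
    (hf_lsc : LowerSemicontinuous f)
    (hf_bdd : ∃ m : ℝ, ∀ z, (m : EReal) ≤ f z)
    (hf_cont : ContinuousOn f {z | f z ≠ ⊤})
    (hg_cvx : ConvexOn ℝ Set.univ g)
    (hL : 0 < L)
    (hh_grad : ∀ z, HasGradientAt h (h' z) z)
    (hh_lip : LipschitzWith (Real.toNNReal L) h')
    (hΩ : ∃ z, g z ≠ 0)
    (hfh : ∀ z, 0 ≤ f z + ((h z : ℝ) : EReal))
    (hg_pos : ∀ z, f z ≠ ⊤ → g z ≠ 0 → 0 < g z)
    (xs : EuclideanSpace ℝ (Fin n)) (hxs : g xs ≠ 0 ∧ f xs ≠ ⊤)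
    (cs : ℝ) (hcs : cs = (Ffrac f g h xs).toReal) :
    ((∃ δ > (0 : ℝ), ∀ x, ‖x - xs‖ < δ → Ffrac f g h xs ≤ Ffrac f g h x) ↔
      (∃ δ > (0 : ℝ), ∀ x, g x ≠ 0 → ‖x - xs‖ < δ →
        f xs + ((h xs - cs * g xs : ℝ) : EReal) ≤ f x + ((h x - cs * g x : ℝ) : EReal))) ∧
    ((∀ x, Ffrac f g h xs ≤ Ffrac f g h x) ↔
      (∀ x, g x ≠ 0 →
        f xs + ((h xs - cs * g xs : ℝ) : EReal) ≤ f x + ((h x - cs * g x : ℝ) : EReal))) := by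
  subst hcs
  simpa only [isLocalMin_iff_exists_norm_sub_lt, isLocalMinOn_iff_exists_norm_sub_lt,
    isMinOn_iff, Set.mem_univ, true_imp_iff, Set.mem_ofPred_eq, Ffrac_eq_fractionalObjective,
    parametricObjective] using
    fractional_iff_parametric_minimizer_general h hf_ne_bot hg_pos hxs.1 hxs.2
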